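/- For every 3-component long link f, every ε > 0 and every 2-form η as specified, the configuration space integrals I_{𝒳₁}(f), I_{𝒳₂}(f), I_{𝒳₃}(f) and I_𝒴(f) converge absolutely. -/

import Mathlib

open MeasureTheory Filter Topology Set

noncomputable section

abbrev E2 : Type := EuclideanSpace ℝ (Fin 2)
abbrev E3 : Type := EuclideanSpace ℝ (Fin 3)
abbrev E4 : Type := EuclideanSpace ℝ (Fin 4)
abbrev E6 : Type := EuclideanSpace ℝ (Fin 6)

/-- The point of `ℝ³` with the given coordinates. -/
def mk3 (x y z : ℝ) : E3 := (WithLp.equiv 2 (Fin 3 → ℝ)).symm ![x, y, z]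

/-- The north pole `N = (0,0,1)` of `S² ⊆ ℝ³`. -/
def NP : E3 := mk3 0 0 1

/-- Projection of `ℝ³` onto the plane `N^⊥` (the first two coordinates). -/
def pr12 (v : E3) : ℝ × ℝ := (v 0, v 1)

/-- The `N`-coordinate. -/
def pr3 (v : E3) : ℝ := v 2

/-- `unitv v = v / ‖v‖`. -/
def unitv (v : E3) : E3 := ‖v‖⁻¹ • v

/-- Determinant of the projections to `N^⊥` of two vectors (first vector, then second). -/
def cross2 (a b : E3) : ℝ := a 0 * b 1 - a 1 * b 0

/-- 3×3 determinant (scalar triple product); for `p ∈ S²` and `v, w` tangent to `S²` at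
`p`, this is the value of the standard area form of `S²` at `p` on `(v, w)`. -/
def det3 (p v w : E3) : ℝ :=
  p 0 * (v 1 * w 2 - v 2 * w 1) - p 1 * (v 0 * w 2 - v 2 * w 0) +
    p 2 * (v 0 * w 1 - v 1 * w 0)

/-! ### Long knots and 3-component long links -/

/-- A long knot: a smooth embedding `ℝ ↪ ℝ³` which is standard outside `[-1,1]`. -/
def IsLongKnot (f : ℝ → E3) : Prop :=
  ContDiff ℝ (⊤ : ℕ∞) f ∧ Function.Injective f ∧ (∀ t, deriv f t ≠ 0) ∧
    ∀ x : ℝ, 1 ≤ |x| → f x = mk3 x 0 0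

/-- Smooth isotopy of long knots. -/
def KnotIsotopic (f₀ f₁ : ℝ → E3) : Prop :=
  ∃ H : ℝ → ℝ → E3,
    ContDiff ℝ (⊤ : ℕ∞) (fun p : ℝ × ℝ => H p.1 p.2) ∧
    (∀ s, IsLongKnot (H s)) ∧ H 0 = f₀ ∧ H 1 = f₁

/-- A 3-component long link: a smooth embedding `ℝ ⊔ ℝ ⊔ ℝ ↪ ℝ³`, standard outside
`[-1,1]`, component `k` (for `k = 1,2,3`, i.e. index `i = k - 1 : Fin 3`) having ends
`x ↦ (x, (2 - k)|x|, 0)`. -/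
def IsLongLink3 (f : Fin 3 → ℝ → E3) : Prop :=
  (∀ i, ContDiff ℝ (⊤ : ℕ∞) (f i)) ∧
  (∀ i j s t, f i s = f j t → i = j ∧ s = t) ∧
  (∀ i t, deriv (f i) t ≠ 0) ∧
  ∀ i (x : ℝ), 1 ≤ |x| → f i x = mk3 x ((1 - ((i : ℕ) : ℝ)) * |x|) 0

/-- Smooth isotopy of 3-component long links. -/
def LinkIsotopic (f₀ f₁ : Fin 3 → ℝ → E3) : Prop :=
  ∃ H : ℝ → Fin 3 → ℝ → E3,
    (∀ i, ContDiff ℝ (⊤ : ℕ∞) (fun p : ℝ × ℝ => H p.1 i p.2)) ∧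
    (∀ s, IsLongLink3 (H s)) ∧ H 0 = f₀ ∧ H 1 = f₁

/-! ### Diagrams, crossings and Gauss diagram pairings -/

/-- All self-intersections of the projection of the long knot `f` are transverse
(any two branches meeting at a multiple point have independent projected tangents). -/
def TransverseK (f : ℝ → E3) : Prop :=
  ∀ t u, t ≠ u → pr12 (f t) = pr12 (f u) → cross2 (deriv f t) (deriv f u) ≠ 0

/-- The diagram of `f` has only transverse double points. -/
def OnlyDoubleK (f : ℝ → E3) : Prop :=
  TransverseK f ∧
  ∀ t u v : ℝ, t ≠ u → u ≠ v → t ≠ v →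
    pr12 (f t) = pr12 (f u) → pr12 (f u) = pr12 (f v) → False

/-- All self-intersections of the projection of the long link `f` are transverse. -/
def TransverseL (f : Fin 3 → ℝ → E3) : Prop :=
  ∀ i j s t, (i, s) ≠ (j, t) → pr12 (f i s) = pr12 (f j t) →
    cross2 (deriv (f i) s) (deriv (f j) t) ≠ 0

/-- The diagram of the long link `f` has only transverse double points. -/
def OnlyDoubleL (f : Fin 3 → ℝ → E3) : Prop :=
  TransverseL f ∧
  ∀ i j k s t u, (i, s) ≠ (j, t) → (j, t) ≠ (k, u) → (i, s) ≠ (k, u) →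
    pr12 (f i s) = pr12 (f j t) → pr12 (f j t) = pr12 (f k u) → False

/-- Crossings of a long knot diagram: pairs `(t, u)` with `t` on the lower and `u` on the
upper strand; the corresponding chord of the Gauss diagram is directed from `t` to `u`. -/
def CrossingK (f : ℝ → E3) : Set (ℝ × ℝ) :=
  {p | p.1 ≠ p.2 ∧ pr12 (f p.1) = pr12 (f p.2) ∧ pr3 (f p.1) < pr3 (f p.2)}

/-- The sign of the crossing `p = (t, u)` (`+1` iff the projected tangent of the
over-strand followed by that of the under-strand is a positive basis of `N^⊥`). -/
def csignK (f : ℝ → E3) (p : ℝ × ℝ) : ℝ :=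
  Real.sign (cross2 (deriv f p.2) (deriv f p.1))

/-- Gauss diagram pairing for a long knot: the sum, over all pairs of chords of the Gauss
diagram of `f` in the relative position prescribed by `R`, of the products of signs. -/
def pairK (f : ℝ → E3) (R : ℝ × ℝ → ℝ × ℝ → Prop) : ℝ :=
  ∑ᶠ q ∈ {q : (ℝ × ℝ) × (ℝ × ℝ) | q.1 ∈ CrossingK f ∧ q.2 ∈ CrossingK f ∧ R q.1 q.2},
    csignK f q.1 * csignK f q.2

/-- `⟨X, G_D⟩` : chords `x₁ → x₃` and `x₄ → x₂` with `x₁ < x₂ < x₃ < x₄`. -/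
def pairXK (f : ℝ → E3) : ℝ :=
  pairK f fun p q => p.1 < q.2 ∧ q.2 < p.2 ∧ p.2 < q.1

/-- `⟨X′₁, G_D⟩` : chords `a → b` and `c → a` with `a < b < c`. -/
def pairX1K (f : ℝ → E3) : ℝ :=
  pairK f fun p q => q.2 = p.1 ∧ p.1 < p.2 ∧ p.2 < q.1

/-- `⟨X′₂, G_D⟩` : chords `a → b` and `c → b` with `a < b < c`. -/
def pairX2K (f : ℝ → E3) : ℝ :=
  pairK f fun p q => q.2 = p.2 ∧ p.1 < p.2 ∧ p.2 < q.1

/-- `⟨X′₃, G_D⟩` : chords `a → c` and `c → b` with `a < b < c`. -/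
def pairX3K (f : ℝ → E3) : ℝ :=
  pairK f fun p q => p.2 = q.1 ∧ p.1 < q.2 ∧ q.2 < p.2

/-- Crossings of a 3-strand diagram between strand `i` (under) and strand `j` (over);
the corresponding chord is directed from `p.1` on strand `i` to `p.2` on strand `j`. -/
def CrossingL (f : Fin 3 → ℝ → E3) (i j : Fin 3) : Set (ℝ × ℝ) :=
  {p | pr12 (f i p.1) = pr12 (f j p.2) ∧ pr3 (f i p.1) < pr3 (f j p.2)}

/-- The sign of the crossing `p` between strand `i` (under) and strand `j` (over). -/
def csignL (f : Fin 3 → ℝ → E3) (i j : Fin 3) (p : ℝ × ℝ) : ℝ :=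
  Real.sign (cross2 (deriv (f j) p.2) (deriv (f i) p.1))

/-- Gauss diagram pairing for a 3-component long link. -/
def pairL (f : Fin 3 → ℝ → E3) (i₁ j₁ i₂ j₂ : Fin 3) (R : ℝ × ℝ → ℝ × ℝ → Prop) : ℝ :=
  ∑ᶠ q ∈ {q : (ℝ × ℝ) × (ℝ × ℝ) |
      q.1 ∈ CrossingL f i₁ j₁ ∧ q.2 ∈ CrossingL f i₂ j₂ ∧ R q.1 q.2},
    csignL f i₁ j₁ q.1 * csignL f i₂ j₂ q.2

/-- `⟨𝒳₁, G_D⟩` : a chord from `t` on strand 1 to strand 2, and a chord from strand 3 to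
`t′` on strand 1, with `t < t′`. -/
def pairL1 (f : Fin 3 → ℝ → E3) : ℝ := pairL f 0 1 2 0 fun p q => p.1 < q.2

/-- `⟨𝒳₂, G_D⟩` : a chord from strand 1 to `u` on strand 2, and a chord from strand 3 to
`u′` on strand 2, with `u < u′`. -/
def pairL2 (f : Fin 3 → ℝ → E3) : ℝ := pairL f 0 1 2 1 fun p q => p.2 < q.2

/-- `⟨𝒳₃, G_D⟩` : a chord from strand 1 to `v` on strand 3, and a chord from `v′` on
strand 3 to strand 2, with `v < v′`. -/
def pairL3 (f : Fin 3 → ℝ → E3) : ℝ := pairL f 0 2 2 1 fun p q => p.2 < q.1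

/-- `⟨𝒳′₁, G_D⟩` : as `𝒳₁` but with `t = t′` (a triple point). -/
def pairL1' (f : Fin 3 → ℝ → E3) : ℝ := pairL f 0 1 2 0 fun p q => p.1 = q.2

/-- `⟨𝒳′₂, G_D⟩` : as `𝒳₂` but with `u = u′` (a triple point). -/
def pairL2' (f : Fin 3 → ℝ → E3) : ℝ := pairL f 0 1 2 1 fun p q => p.2 = q.2

/-- `⟨𝒳′₃, G_D⟩` : as `𝒳₃` but with `v = v′` (a triple point). -/
def pairL3' (f : Fin 3 → ℝ → E3) : ℝ := pairL f 0 2 2 1 fun p q => p.2 = q.1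

/-! ### The localized unit 2-form `η` on `S²` -/

/-- The action of a 2×2 matrix on `ℝ³ = ℝ² × ℝ`, acting on the first two coordinates. -/
def act2 (A : Matrix (Fin 2) (Fin 2) ℝ) (v : E3) : E3 :=
  mk3 (A 0 0 * v 0 + A 0 1 * v 1) (A 1 0 * v 0 + A 1 1 * v 1) (v 2)

/-- `IsEtaForm ε g` says that `η = g · (standard area form of S²)` is a smooth 2-form on
`S²` such that: (i) `supp η` lies in the `ε`-neighbourhood of the north pole `N`;
(ii) `φ*η = det φ · η` for every `φ ∈ O(2) ⊆ O(3)` (since `φ* (area form) = det φ ·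
(area form)`, this amounts to `g ∘ φ = g`); (iii) `∫_{S²} η = 1`, i.e. the integral of
`g` against the surface measure of `S²` is `1`. -/
def IsEtaForm (ε : ℝ) (g : E3 → ℝ) : Prop :=
  ContDiff ℝ (⊤ : ℕ∞) g ∧
  (∀ v : E3, ‖v‖ = 1 → g v ≠ 0 → ‖v - NP‖ < ε) ∧
  (∀ A : Matrix (Fin 2) (Fin 2) ℝ, A * A.transpose = 1 →
    ∀ v : E3, ‖v‖ = 1 → g (act2 A v) = g v) ∧
  ∫ v : Metric.sphere (0 : E3) 1, g v ∂((volume : Measure E3).toSphere) = 1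

/-! ### Configuration space integrals -/

/-- `i`-th partial derivative of a map `ℝⁿ → ℝ³`. -/
def pdv {n : ℕ} (h : EuclideanSpace ℝ (Fin n) → E3) (i : Fin n)
    (x : EuclideanSpace ℝ (Fin n)) : E3 :=
  fderiv ℝ h x (EuclideanSpace.single i 1)

/-- The pullback `h*η` (for `η = g · (area form)`) evaluated at the point `x` on the
coordinate vectors `(e_i, e_j)`. -/
def form2 {n : ℕ} (g : E3 → ℝ) (h : EuclideanSpace ℝ (Fin n) → E3)
    (x : EuclideanSpace ℝ (Fin n)) (i j : Fin n) : ℝ :=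
  g (h x) * det3 (h x) (pdv h i x) (pdv h j x)

/-- `(h*η ∧ k*η)(e₀, e₁, e₂, e₃)` at `x`. -/
def wedge22 (g : E3 → ℝ) (h k : E4 → E3) (x : E4) : ℝ :=
  (1 / 4) * ∑ σ : Equiv.Perm (Fin 4),
    ((Equiv.Perm.sign σ : ℤ) : ℝ) * form2 g h x (σ 0) (σ 1) * form2 g k x (σ 2) (σ 3)

/-- `(h*η ∧ k*η ∧ l*η)(e₀, …, e₅)` at `x`. -/
def wedge222 (g : E3 → ℝ) (h k l : E6 → E3) (x : E6) : ℝ :=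
  (1 / 8) * ∑ σ : Equiv.Perm (Fin 6),
    ((Equiv.Perm.sign σ : ℤ) : ℝ) * form2 g h x (σ 0) (σ 1) * form2 g k x (σ 2) (σ 3) *
      form2 g l x (σ 4) (σ 5)

/-- The configuration space `C_X = {x₁ < x₂ < x₃ < x₄}`. -/
def CX : Set E4 := {x | x 0 < x 1 ∧ x 1 < x 2 ∧ x 2 < x 3}

/-- The integrand `ω_X = h₁₃*η ∧ h₄₂*η` for a long knot. -/
def omegaX (f : ℝ → E3) (g : E3 → ℝ) : E4 → ℝ :=
  wedge22 g (fun x => unitv (f (x 2) - f (x 0))) (fun x => unitv (f (x 1) - f (x 3)))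

/-- The configuration space integral `I_X(f)` of a long knot. -/
def IX (f : ℝ → E3) (g : E3 → ℝ) : ℝ := ∫ x in CX, omegaX f g x

/-- The free point `x₄ ∈ ℝ³` in a `Y`-configuration `(x₁,x₂,x₃;x₄) ∈ ℝ³ × ℝ³ = ℝ⁶`. -/
def ptY (x : E6) : E3 := mk3 (x 3) (x 4) (x 5)

/-- The configuration space `C_Y(f)` for a long knot. -/
def CY (f : ℝ → E3) : Set E6 :=
  {x | x 0 < x 1 ∧ x 1 < x 2 ∧ ptY x ≠ f (x 0) ∧ ptY x ≠ f (x 1) ∧ ptY x ≠ f (x 2)}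

/-- The integrand `ω_Y = h₁₄*η ∧ h₄₂*η ∧ h₃₄*η` for a long knot. -/
def omegaY (f : ℝ → E3) (g : E3 → ℝ) : E6 → ℝ :=
  wedge222 g (fun x => unitv (ptY x - f (x 0))) (fun x => unitv (f (x 1) - ptY x))
    (fun x => unitv (ptY x - f (x 2)))

/-- The configuration space integral `I_Y(f)` of a long knot. -/
def IY (f : ℝ → E3) (g : E3 → ℝ) : ℝ := ∫ x in CY f, omegaY f g x

def CL1 : Set E4 := {x | x 0 < x 1}
def CL2 : Set E4 := {x | x 1 < x 2}
def CL3 : Set E4 := {x | x 2 < x 3}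

/-- The integrand of `I_{𝒳₁}(f)` for a 3-component long link. -/
def omegaL1 (f : Fin 3 → ℝ → E3) (g : E3 → ℝ) : E4 → ℝ :=
  wedge22 g (fun x => unitv (f 1 (x 2) - f 0 (x 0))) (fun x => unitv (f 2 (x 3) - f 0 (x 1)))

/-- The integrand of `I_{𝒳₂}(f)` for a 3-component long link. -/
def omegaL2 (f : Fin 3 → ℝ → E3) (g : E3 → ℝ) : E4 → ℝ :=
  wedge22 g (fun x => unitv (f 1 (x 1) - f 0 (x 0))) (fun x => unitv (f 1 (x 2) - f 2 (x 3)))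

/-- The integrand of `I_{𝒳₃}(f)` for a 3-component long link. -/
def omegaL3 (f : Fin 3 → ℝ → E3) (g : E3 → ℝ) : E4 → ℝ :=
  wedge22 g (fun x => unitv (f 2 (x 2) - f 0 (x 0))) (fun x => unitv (f 1 (x 1) - f 2 (x 3)))

/-- The configuration space integral `I_{𝒳₁}(f)`. -/
def IL1 (f : Fin 3 → ℝ → E3) (g : E3 → ℝ) : ℝ := ∫ x in CL1, omegaL1 f g x

/-- The configuration space integral `I_{𝒳₂}(f)`. -/
def IL2 (f : Fin 3 → ℝ → E3) (g : E3 → ℝ) : ℝ := ∫ x in CL2, omegaL2 f g x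

/-- The configuration space integral `I_{𝒳₃}(f)`. -/
def IL3 (f : Fin 3 → ℝ → E3) (g : E3 → ℝ) : ℝ := ∫ x in CL3, omegaL3 f g x

/-- The configuration space `C_𝒴(f)` for a 3-component long link. -/
def CYL (f : Fin 3 → ℝ → E3) : Set E6 :=
  {x | ptY x ≠ f 0 (x 0) ∧ ptY x ≠ f 1 (x 1) ∧ ptY x ≠ f 2 (x 2)}

/-- The integrand `ω_𝒴 = h₁₄*η ∧ h₄₂*η ∧ h₃₄*η` for a 3-component long link. -/
def omegaYL (f : Fin 3 → ℝ → E3) (g : E3 → ℝ) : E6 → ℝ :=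
  wedge222 g (fun x => unitv (ptY x - f 0 (x 0))) (fun x => unitv (f 1 (x 1) - ptY x))
    (fun x => unitv (ptY x - f 2 (x 2)))

/-- The configuration space integral `I_𝒴(f)`. -/
def ILY (f : Fin 3 → ℝ → E3) (g : E3 → ℝ) : ℝ := ∫ x in CYL f, omegaYL f g x

/-! ### Model triple points -/

/-- The affine parametrization `t ↦ a + t • v` of a straight segment. -/
def seg (a v : E3) (t : ℝ) : E3 := a + t • v

/-- A model triple point: three straight segments `S₁, S₂, S₃` (indexed by `0, 1, 2`),
`S_k` parametrized by `seg (a k) (v k) : (-δ, δ) → ℝ³`, all parallel to the plane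
`N^⊥`, whose projections to `N^⊥` meet pairwise transversely at the single common point
which is the projection of each midpoint `a k`, and with `S₂` higher than `S₁`, `S₃`. -/
def IsModelTriple (a v : Fin 3 → E3) : Prop :=
  (∀ k, v k 2 = 0) ∧ (∀ k, v k ≠ 0) ∧
  pr12 (a 0) = pr12 (a 1) ∧ pr12 (a 1) = pr12 (a 2) ∧
  (∀ j k, j ≠ k → cross2 (v j) (v k) ≠ 0) ∧
  a 0 2 < a 1 2 ∧ a 2 2 < a 1 2

/-- A model triple point of type `(←, s₁, s₂, s₃)`: `S₁` passes over `S₃`, and the signs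
of the crossings `S₁–S₃`, `S₁–S₂`, `S₂–S₃` are `s₁, s₂, s₃` respectively. -/
def ModelLeft (a v : Fin 3 → E3) (s1 s2 s3 : ℝ) : Prop :=
  IsModelTriple a v ∧ a 2 2 < a 0 2 ∧
  s1 = Real.sign (cross2 (v 0) (v 2)) ∧
  s2 = Real.sign (cross2 (v 1) (v 0)) ∧
  s3 = Real.sign (cross2 (v 1) (v 2))

/-- A model triple point of type `(→, s₁, s₂, s₃)`: `S₃` passes over `S₁`, and the signs
of the crossings `S₁–S₃`, `S₁–S₂`, `S₂–S₃` are `s₁, s₂, s₃` respectively. -/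
def ModelRight (a v : Fin 3 → E3) (s1 s2 s3 : ℝ) : Prop :=
  IsModelTriple a v ∧ a 0 2 < a 2 2 ∧
  s1 = Real.sign (cross2 (v 2) (v 0)) ∧
  s2 = Real.sign (cross2 (v 1) (v 0)) ∧
  s3 = Real.sign (cross2 (v 1) (v 2))

/-- The cube `(-δ, δ)⁴ ⊆ ℝ⁴`. -/
def cube4 (δ : ℝ) : Set E4 := {x | ∀ i, |x i| < δ}

/-- The model configuration space integral `I_X^{X′₁}`: the two points `t₁ < t₂` lie on
`S₁`, the point `t₃` on `S₂` and the point `t₄` on `S₃`; the maps are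
`h₁₃ = unit (f₂(t₃) - f₁(t₁))` and `h₄₂ = unit (f₁(t₂) - f₃(t₄))`. -/
def IX1model (a v : Fin 3 → E3) (δ : ℝ) (g : E3 → ℝ) : ℝ :=
  ∫ x in cube4 δ ∩ {x : E4 | x 0 < x 1},
    wedge22 g (fun x => unitv (seg (a 1) (v 1) (x 2) - seg (a 0) (v 0) (x 0)))
      (fun x => unitv (seg (a 0) (v 0) (x 1) - seg (a 2) (v 2) (x 3))) x

/-- The model configuration space integral `I_X^{X′₂}` (`(X′₂, l)` for a model of type
`←`, `(X′₂, r)` for a model of type `→`): the two points `t₂ < t₃` lie on `S₂`, the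
point `t₁` on `S₁` and the point `t₄` on `S₃`; the maps are
`h₁₃ = unit (f₂(t₃) - f₁(t₁))` and `h₄₂ = unit (f₂(t₂) - f₃(t₄))`. -/
def IX2model (a v : Fin 3 → E3) (δ : ℝ) (g : E3 → ℝ) : ℝ :=
  ∫ x in cube4 δ ∩ {x : E4 | x 1 < x 2},
    wedge22 g (fun x => unitv (seg (a 1) (v 1) (x 2) - seg (a 0) (v 0) (x 0)))
      (fun x => unitv (seg (a 1) (v 1) (x 1) - seg (a 2) (v 2) (x 3))) x

/-- The model configuration space integral `I_X^{X′₃}`: the two points `t₃ < t₄` lie on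
`S₃`, the point `t₁` on `S₁` and the point `t₂` on `S₂`; the maps are
`h₁₃ = unit (f₃(t₃) - f₁(t₁))` and `h₄₂ = unit (f₂(t₂) - f₃(t₄))`. -/
def IX3model (a v : Fin 3 → E3) (δ : ℝ) (g : E3 → ℝ) : ℝ :=
  ∫ x in cube4 δ ∩ {x : E4 | x 2 < x 3},
    wedge22 g (fun x => unitv (seg (a 2) (v 2) (x 2) - seg (a 0) (v 0) (x 0)))
      (fun x => unitv (seg (a 1) (v 1) (x 1) - seg (a 2) (v 2) (x 3))) x

/-- The model `Y`-integral `I_Y^{s₁,s₂,s₃}` over `(-δ,δ)³ × ℝ³`: the point `t_k` lies on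
`S_k` and `x₄ ∈ ℝ³` is free; the maps are `h₁₄ = unit (x₄ - f₁(t₁))`,
`h₄₂ = unit (f₂(t₂) - x₄)` and `h₃₄ = unit (x₄ - f₃(t₃))`. -/
def IYmodel (a v : Fin 3 → E3) (δ : ℝ) (g : E3 → ℝ) : ℝ :=
  ∫ x in {x : E6 | |x 0| < δ ∧ |x 1| < δ ∧ |x 2| < δ ∧
      ptY x ≠ seg (a 0) (v 0) (x 0) ∧ ptY x ≠ seg (a 1) (v 1) (x 1) ∧
      ptY x ≠ seg (a 2) (v 2) (x 2)},
    wedge222 g (fun x => unitv (ptY x - seg (a 0) (v 0) (x 0)))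
      (fun x => unitv (seg (a 1) (v 1) (x 1) - ptY x))
      (fun x => unitv (ptY x - seg (a 2) (v 2) (x 2))) x

/-- Near every (triple or higher) multiple point of the diagram, the strands of the long
knot `f` are straight segments parallel to the plane `N^⊥`. -/
def StraightNearMultipleK (f : ℝ → E3) : Prop :=
  ∀ t u v : ℝ, t ≠ u → u ≠ v → t ≠ v →
    pr12 (f t) = pr12 (f u) → pr12 (f u) = pr12 (f v) →
    ∃ δ > (0 : ℝ), ∃ w : E3, w 2 = 0 ∧ ∀ s : ℝ, |s - t| < δ → f s = f t + (s - t) • w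

/-- Near every (triple or higher) multiple point of the diagram, the strands of the long
link `f` are straight segments parallel to the plane `N^⊥`. -/
def StraightNearMultipleL (f : Fin 3 → ℝ → E3) : Prop :=
  ∀ (i j k : Fin 3) (t u v : ℝ), (i, t) ≠ (j, u) → (j, u) ≠ (k, v) → (i, t) ≠ (k, v) →
    pr12 (f i t) = pr12 (f j u) → pr12 (f j u) = pr12 (f k v) →
    ∃ δ > (0 : ℝ), ∃ w : E3, w 2 = 0 ∧ ∀ s : ℝ, |s - t| < δ → f i s = f i t + (s - t) • w

/-! ### Closed 2-component links and the linking number -/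

/-- A smooth loop in `ℝ³`, parametrized with period 1 and injective on a period. -/
def IsLoop (f : ℝ → E3) : Prop :=
  ContDiff ℝ (⊤ : ℕ∞) f ∧ (∀ t, f (t + 1) = f t) ∧ (∀ t, deriv f t ≠ 0) ∧
    ∀ s t : ℝ, f s = f t → ∃ n : ℤ, t - s = n

/-- The diagram of the 2-component link `(f 0, f 1)` has only transverse double points. -/
def OnlyDouble2 (f : Fin 2 → ℝ → E3) : Prop :=
  (∀ i j s t, f i s ≠ f j t → pr12 (f i s) = pr12 (f j t) →
      cross2 (deriv (f i) s) (deriv (f j) t) ≠ 0) ∧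
  ∀ i j k s t u, f i s ≠ f j t → f j t ≠ f k u → f i s ≠ f k u →
    pr12 (f i s) = pr12 (f j t) → pr12 (f j t) = pr12 (f k u) → False

/-- The crossings of the diagram at which `f₂` passes over `f₁` (one parameter period). -/
def Crossing12 (f₁ f₂ : ℝ → E3) : Set (ℝ × ℝ) :=
  {p | p.1 ∈ Ico (0 : ℝ) 1 ∧ p.2 ∈ Ico (0 : ℝ) 1 ∧
    pr12 (f₁ p.1) = pr12 (f₂ p.2) ∧ pr3 (f₁ p.1) < pr3 (f₂ p.2)}

/-- The sum of the signs of the crossings of the diagram at which `f₂` passes over `f₁`;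
this is the linking number `lk(f₁, f₂)`, i.e. the mapping degree of
`h : S¹ × S¹ → S²`. -/
def lkSum (f₁ f₂ : ℝ → E3) : ℝ :=
  ∑ᶠ p ∈ Crossing12 f₁ f₂, Real.sign (cross2 (deriv f₂ p.2) (deriv f₁ p.1))

/-- The fundamental domain `[0,1) × [0,1)` of `S¹ × S¹`. -/
def sq01 : Set E2 := {x | x 0 ∈ Ico (0 : ℝ) 1 ∧ x 1 ∈ Ico (0 : ℝ) 1}

/-- `∫_{S¹×S¹} h*η` for `h(x₁,x₂) = unit (f₂(x₂) - f₁(x₁))`. -/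
def lkIntegral (f₁ f₂ : ℝ → E3) (g : E3 → ℝ) : ℝ :=
  ∫ x in sq01, form2 g (fun x : E2 => unitv (f₂ (x 1) - f₁ (x 0))) x 0 1

/-! ### Derivative of the normalisation map -/

lemma mk3_0 (x y z : ℝ) : (mk3 x y z) 0 = x := rfl
lemma mk3_1 (x y z : ℝ) : (mk3 x y z) 1 = y := rfl
lemma mk3_2 (x y z : ℝ) : (mk3 x y z) 2 = z := rfl

lemma abs_coord_le (v : E3) (i : Fin 3) : |v i| ≤ ‖v‖ := by
  simpa using PiLp.norm_apply_le v i

lemma unitv_hasFDerivAt (p : E3) (hp : p ≠ 0) :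
    ∃ U : E3 →L[ℝ] E3, HasFDerivAt unitv U p ∧ (∀ w, ‖U w‖ ≤ 2 / ‖p‖ * ‖w‖) ∧ U p = 0 ∧
      (∀ w, ∃ c d : ℝ, U w = c • w + d • p) := by
  have hn : ‖p‖ ≠ 0 := norm_ne_zero_iff.mpr hp
  have hpos : 0 < ‖p‖ := norm_pos_iff.mpr hp
  have hd : DifferentiableAt ℝ (fun q : E3 => ‖q‖) p := (contDiffAt_norm ℝ hp).differentiableAt (n := 1) (by simp)
  have h1 := hd.hasFDerivAt
  set N := fderiv ℝ (fun q : E3 => ‖q‖) p with hN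
  have hNp : N p = ‖p‖ := hd.fderiv_norm_self
  have hNle : ∀ w, |N w| ≤ ‖w‖ := by
    intro w
    have h2 : ‖N‖ ≤ 1 := by
      have := norm_fderiv_le_of_lipschitz ℝ (f := fun q : E3 => ‖q‖) (x₀ := p) lipschitzWith_one_norm
      simpa using this
    have := N.le_opNorm w
    rw [Real.norm_eq_abs] at this
    nlinarith [norm_nonneg w]
  have h2 : HasFDerivAt (fun q : E3 => ‖q‖⁻¹) (-(‖p‖ ^ 2)⁻¹ • N) p := by
    exact (hasDerivAt_inv hn).comp_hasFDerivAt p h1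
  have h3 := h2.smul (hasFDerivAt_id p)
  refine ⟨_, h3, ?_, ?_, ?_⟩
  · intro w
    have e : (‖p‖⁻¹ • ContinuousLinearMap.id ℝ E3 + (-(‖p‖ ^ 2)⁻¹ • N).smulRight (id p)) w
        = ‖p‖⁻¹ • w + (-(‖p‖ ^ 2)⁻¹ * N w) • p := by simp
    rw [e]
    refine (norm_add_le _ _).trans ?_
    rw [norm_smul, norm_smul, norm_mul, norm_neg, norm_inv, norm_inv, norm_pow, norm_norm,
      Real.norm_eq_abs (N w)]
    have : (‖p‖ ^ 2)⁻¹ * |N w| * ‖p‖ ≤ ‖p‖⁻¹ * ‖w‖ := by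
      have : (‖p‖ ^ 2)⁻¹ * |N w| * ‖p‖ = ‖p‖⁻¹ * |N w| := by field_simp
      rw [this]
      gcongr
      exact hNle w
    calc _ ≤ ‖p‖⁻¹ * ‖w‖ + ‖p‖⁻¹ * ‖w‖ := by gcongr
      _ = _ := by ring
  · have e : (‖p‖⁻¹ • ContinuousLinearMap.id ℝ E3 + (-(‖p‖ ^ 2)⁻¹ • N).smulRight (id p)) p
        = ‖p‖⁻¹ • p + (-(‖p‖ ^ 2)⁻¹ * N p) • p := by simp
    rw [e, hNp, ← add_smul]
    have : ‖p‖⁻¹ + -(‖p‖ ^ 2)⁻¹ * ‖p‖ = 0 := by field_simp; ring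
    rw [this, zero_smul]
  · intro w
    exact ⟨‖p‖⁻¹, -(‖p‖ ^ 2)⁻¹ * N w, by simp⟩

lemma norm_unitv (p : E3) (hp : p ≠ 0) : ‖unitv p‖ = 1 := by
  unfold unitv
  rw [norm_smul, norm_inv, norm_norm, inv_mul_cancel₀ (norm_ne_zero_iff.mpr hp)]

lemma abs_det3_le (p v w : E3) : |det3 p v w| ≤ 6 * (‖p‖ * ‖v‖ * ‖w‖) := by
  have key : ∀ i j k : Fin 3, |p i * (v j * w k)| ≤ ‖p‖ * ‖v‖ * ‖w‖ := by
    intro i j k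
    rw [abs_mul, abs_mul, ← mul_assoc]
    gcongr <;> apply abs_coord_le
  have e : det3 p v w = p 0 * (v 1 * w 2) - p 0 * (v 2 * w 1) - p 1 * (v 0 * w 2)
      + p 1 * (v 2 * w 0) + p 2 * (v 0 * w 1) - p 2 * (v 1 * w 0) := by
    unfold det3; ring
  rw [e]
  have h1 := abs_le.mp (key 0 1 2)
  have h2 := abs_le.mp (key 0 2 1)
  have h3 := abs_le.mp (key 1 0 2)
  have h4 := abs_le.mp (key 1 2 0)
  have h5 := abs_le.mp (key 2 0 1)
  have h6 := abs_le.mp (key 2 1 0)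
  rw [abs_le]
  constructor <;> linarith [h1.1, h1.2, h2.1, h2.2, h3.1, h3.2, h4.1, h4.2, h5.1, h5.2, h6.1, h6.2]

/-- The basic bound on the pulled back form. -/
lemma form2_bound {n : ℕ} (g : E3 → ℝ) (G M : ℝ) (hG : ∀ v : E3, ‖v‖ = 1 → |g v| ≤ G)
    (v : EuclideanSpace ℝ (Fin n) → E3) (v' : EuclideanSpace ℝ (Fin n) →L[ℝ] E3)
    (x : EuclideanSpace ℝ (Fin n)) (hv : HasFDerivAt v v' x) (hx : v x ≠ 0)
    (hM : ∀ i, ‖v' (EuclideanSpace.single i 1)‖ ≤ M) (i j : Fin n) :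
    |form2 g (fun y => unitv (v y)) x i j| ≤ 24 * G * M ^ 2 / ‖v x‖ ^ 2 := by
  obtain ⟨U, hU, hUle, -, -⟩ := unitv_hasFDerivAt (v x) hx
  have hpos : 0 < ‖v x‖ := norm_pos_iff.mpr hx
  have hc : HasFDerivAt (fun y => unitv (v y)) (U.comp v') x := hU.comp x hv
  have hpd : ∀ k, ‖pdv (fun y => unitv (v y)) k x‖ ≤ 2 / ‖v x‖ * M := by
    intro k
    unfold pdv
    rw [hc.fderiv]
    refine (hUle _).trans ?_
    gcongr
    exact hM k
  unfold form2
  have h1 := norm_unitv _ hx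
  have hG0 : 0 ≤ G := (abs_nonneg _).trans (hG _ h1)
  rw [abs_mul]
  calc _ ≤ G * (6 * (1 * (2 / ‖v x‖ * M) * (2 / ‖v x‖ * M))) := by
        gcongr
        · exact hG _ h1
        · refine (abs_det3_le _ _ _).trans ?_
          rw [h1]
          have h0 : 0 ≤ 2 / ‖v x‖ * M := (norm_nonneg _).trans (hpd i)
          gcongr
          · exact hpd i
          · exact hpd j
    _ = _ := by field_simp; ring

/-- If everything is planar, the pulled back form vanishes. -/
lemma form2_planar {n : ℕ} (g : E3 → ℝ)
    (v : EuclideanSpace ℝ (Fin n) → E3) (v' : EuclideanSpace ℝ (Fin n) →L[ℝ] E3)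
    (x : EuclideanSpace ℝ (Fin n)) (hv : HasFDerivAt v v' x) (hx : v x ≠ 0)
    (h0 : v x 2 = 0) (h' : ∀ i, v' (EuclideanSpace.single i 1) 2 = 0) (i j : Fin n) :
    form2 g (fun y => unitv (v y)) x i j = 0 := by
  obtain ⟨U, hU, -, -, hUc⟩ := unitv_hasFDerivAt (v x) hx
  have hc : HasFDerivAt (fun y => unitv (v y)) (U.comp v') x := hU.comp x hv
  have hpd : ∀ k, (pdv (fun y => unitv (v y)) k x) 2 = 0 := by
    intro k
    unfold pdv
    rw [hc.fderiv]
    obtain ⟨c, d, e⟩ := hUc (v' (EuclideanSpace.single k 1))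
    rw [ContinuousLinearMap.comp_apply, e]
    simp [h0, h' k]
  have hu : (unitv (v x)) 2 = 0 := by simp [unitv, h0]
  unfold form2 det3
  rw [hpd i, hpd j, hu]
  ring

/-! ### Geometry of the link -/

lemma link_outer (f : Fin 3 → ℝ → E3) (hf : IsLongLink3 f) (i : Fin 3) (s : ℝ) (hs : 1 < |s|) :
    ∃ c : E3, c 2 = 0 ∧ ‖c‖ ≤ 2 ∧ HasDerivAt (f i) c s ∧ f i s = s • c := by
  obtain ⟨-, -, -, hend⟩ := hf
  have key : ∀ m : ℝ, |m| ≤ 1 → (∀ᶠ t in 𝓝 s, f i t = t • mk3 1 m 0) →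
      ∃ c : E3, c 2 = 0 ∧ ‖c‖ ≤ 2 ∧ HasDerivAt (f i) c s ∧ f i s = s • c := by
    intro m hm h
    refine ⟨mk3 1 m 0, rfl, ?_, ?_, h.self_of_nhds⟩
    · rw [EuclideanSpace.norm_eq, Real.sqrt_le_left (by norm_num)]
      simp only [Fin.sum_univ_three, mk3_0, mk3_1, mk3_2, Real.norm_eq_abs, sq_abs]
      have := sq_le_one_iff_abs_le_one m |>.mpr hm
      nlinarith
    · have h1 : HasDerivAt (fun t : ℝ => t • mk3 1 m 0) ((1 : ℝ) • mk3 1 m 0) s :=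
        (hasDerivAt_id s).smul_const _
      rw [one_smul] at h1
      exact h1.congr_of_eventuallyEq h
  have hmi : |1 - ((i : ℕ) : ℝ)| ≤ 1 := by
    fin_cases i <;> norm_num
  rcases lt_abs.mp hs with h | h
  · refine key (1 - ((i : ℕ) : ℝ)) hmi ?_
    filter_upwards [lt_mem_nhds h] with t ht
    rw [hend i t (by rw [abs_of_pos (by linarith)]; exact ht.le), abs_of_pos (by linarith)]
    ext k
    fin_cases k <;> simp [mk3, mul_comm]
  · refine key (-(1 - ((i : ℕ) : ℝ))) (by rw [abs_neg]; exact hmi) ?_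
    filter_upwards [gt_mem_nhds (show s < -1 by linarith)] with t ht
    rw [hend i t (by rw [abs_of_neg (by linarith)]; linarith), abs_of_neg (by linarith)]
    ext k
    fin_cases k <;> simp [mk3]
    ring

lemma link_deriv_bound (f : Fin 3 → ℝ → E3) (hf : IsLongLink3 f) :
    ∃ M : ℝ, 0 ≤ M ∧ ∀ i s, ‖deriv (f i) s‖ ≤ M := by
  have h : ∀ i, ∃ M : ℝ, ∀ s, ‖deriv (f i) s‖ ≤ M := by
    intro i
    have hc : Continuous (deriv (f i)) := (hf.1 i).continuous_deriv (by simp)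
    obtain ⟨M, hM⟩ := (isCompact_Icc (a := (-1 : ℝ)) (b := 1)).exists_bound_of_continuousOn
      hc.continuousOn
    refine ⟨max M 2, fun s => ?_⟩
    by_cases hs : 1 < |s|
    · obtain ⟨c, -, hc2, hd, -⟩ := link_outer f hf i s hs
      rw [hd.deriv]
      exact hc2.trans (le_max_right _ _)
    · exact (hM s (abs_le.mp (not_lt.mp hs))).trans (le_max_left _ _)
  choose M hM using h
  have hM0 : ∀ i, 0 ≤ M i := fun i => (norm_nonneg _).trans (hM i 0)
  refine ⟨∑ i, M i, Finset.sum_nonneg fun i _ => hM0 i, fun i s => (hM i s).trans ?_⟩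
  exact Finset.single_le_sum (fun i _ => hM0 i) (Finset.mem_univ i)

lemma model_sep (i j : Fin 3) (hij : i ≠ j) (s t : ℝ) :
    (|s| + |t|) / 4 ≤ ‖mk3 s ((1 - ((i : ℕ) : ℝ)) * |s|) 0 - mk3 t ((1 - ((j : ℕ) : ℝ)) * |t|) 0‖ := by
  set v := mk3 s ((1 - ((i : ℕ) : ℝ)) * |s|) 0 - mk3 t ((1 - ((j : ℕ) : ℝ)) * |t|) 0 with hv
  have h0 : |s - t| ≤ ‖v‖ := abs_coord_le v 0
  have h1 : abs ((1 - ((i : ℕ) : ℝ)) * |s| - (1 - ((j : ℕ) : ℝ)) * |t|) ≤ ‖v‖ := abs_coord_le v 1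
  have h2 : |(|s| - |t|)| ≤ ‖v‖ := (abs_abs_sub_abs_le_abs_sub s t).trans h0
  have ha := abs_nonneg s
  have hb := abs_nonneg t
  rw [abs_le] at h1 h2
  obtain ⟨h1, h1'⟩ := h1
  obtain ⟨h2, h2'⟩ := h2
  fin_cases i <;> fin_cases j <;> simp at hij h1 h1' <;> linarith

lemma link_sep_pair (f : Fin 3 → ℝ → E3) (hf : IsLongLink3 f) (i j : Fin 3) (hij : i ≠ j) :
    ∃ κ : ℝ, 0 < κ ∧ ∀ s t, κ * (1 + |s| + |t|) ≤ ‖f i s - f j t‖ := by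
  have hcont : ∀ k, Continuous (f k) := fun k => (hf.1 k).continuous
  have hdiff : ∀ k, ∃ M : ℝ, ∀ s, ‖f k s - mk3 s ((1 - ((k : ℕ) : ℝ)) * |s|) 0‖ ≤ M := by
    intro k
    have hm : Continuous (fun s : ℝ => mk3 s ((1 - ((k : ℕ) : ℝ)) * |s|) 0) := by
      unfold mk3
      refine (PiLp.continuous_toLp 2 _).comp ?_
      refine continuous_pi fun l => ?_
      fin_cases l <;> simp <;> fun_prop
    obtain ⟨M, hM⟩ := (isCompact_Icc (a := (-1 : ℝ)) (b := 1)).exists_bound_of_continuousOn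
      ((hcont k).sub hm).continuousOn
    refine ⟨max M 0, fun s => ?_⟩
    by_cases hs : 1 ≤ |s|
    · rw [hf.2.2.2 k s hs, sub_self, norm_zero]
      exact le_max_right _ _
    · exact (hM s (abs_le.mp (not_le.mp hs).le)).trans (le_max_left _ _)
  obtain ⟨A, hA⟩ := hdiff i
  obtain ⟨B, hB⟩ := hdiff j
  have hA0 : 0 ≤ A := (norm_nonneg _).trans (hA 0)
  have hB0 : 0 ≤ B := (norm_nonneg _).trans (hB 0)
  have hlow : ∀ s t, (|s| + |t|) / 4 - A - B ≤ ‖f i s - f j t‖ := by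
    intro s t
    have h1 := model_sep i j hij s t
    have h2 := hA s
    have h3 := hB t
    set a := mk3 s ((1 - ((i : ℕ) : ℝ)) * |s|) 0
    set b := mk3 t ((1 - ((j : ℕ) : ℝ)) * |t|) 0
    have e : a - b = (f i s - f j t) - (f i s - a) + (f j t - b) := by abel
    have h4 : ‖a - b‖ ≤ ‖f i s - f j t‖ + ‖f i s - a‖ + ‖f j t - b‖ := by
      rw [e]
      exact (norm_add_le _ _).trans (by gcongr; exact norm_sub_le _ _)
    linarith
  set T := 8 * (A + B) + 1 with hT
  have hT0 : 0 < T := by linarith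
  have hK : IsCompact (Icc (-T) T ×ˢ Icc (-T) T : Set (ℝ × ℝ)) := isCompact_Icc.prod isCompact_Icc
  obtain ⟨q, -, hq⟩ := hK.exists_isMinOn (f := fun p : ℝ × ℝ => ‖f i p.1 - f j p.2‖)
    ⟨(0, 0), ⟨⟨by linarith, by linarith⟩, ⟨by simp; linarith, by simp; linarith⟩⟩⟩
    (by have := hcont i; have := hcont j; fun_prop)
  have hδ : 0 < ‖f i q.1 - f j q.2‖ := by
    rw [norm_pos_iff, sub_ne_zero]
    intro h
    exact hij (hf.2.1 _ _ _ _ h).1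
  set δ := ‖f i q.1 - f j q.2‖
  have h12 : 0 < 1 + 2 * T := by linarith
  refine ⟨min (1 / 16) (δ / (1 + 2 * T)), by positivity, fun s t => ?_⟩
  have hs0 := abs_nonneg s
  have ht0 := abs_nonneg t
  by_cases hin : |s| ≤ T ∧ |t| ≤ T
  · have h1 : δ ≤ ‖f i s - f j t‖ := hq (a := (s, t)) ⟨abs_le.mp hin.1, abs_le.mp hin.2⟩
    refine le_trans ?_ h1
    calc min (1 / 16) (δ / (1 + 2 * T)) * (1 + |s| + |t|) ≤ δ / (1 + 2 * T) * (1 + 2 * T) := by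
          have h5 : 1 + |s| + |t| ≤ 1 + 2 * T := by linarith [hin.1, hin.2]
          refine mul_le_mul (min_le_right _ _) h5 (by positivity) (by positivity)
      _ = δ := by field_simp
  · have hst : T ≤ |s| + |t| := by
      by_contra hcon
      exact hin ⟨by linarith, by linarith⟩
    refine le_trans ?_ (hlow s t)
    calc min (1 / 16) (δ / (1 + 2 * T)) * (1 + |s| + |t|) ≤ 1 / 16 * (1 + |s| + |t|) := by
          gcongr
          exact min_le_left _ _
      _ ≤ _ := by linarith

lemma link_sep (f : Fin 3 → ℝ → E3) (hf : IsLongLink3 f) :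
    ∃ κ : ℝ, 0 < κ ∧ κ ≤ 1 ∧ ∀ i j s t, i ≠ j → κ * (1 + |s| + |t|) ≤ ‖f i s - f j t‖ := by
  obtain ⟨a, ha, h01⟩ := link_sep_pair f hf 0 1 (by decide)
  obtain ⟨b, hb, h02⟩ := link_sep_pair f hf 0 2 (by decide)
  obtain ⟨c, hc, h12⟩ := link_sep_pair f hf 1 2 (by decide)
  have hmin : 0 < min (min a b) (min c 1) := by positivity
  have key : ∀ d, min (min a b) (min c 1) ≤ d → ∀ i j : Fin 3,
      (∀ s t, d * (1 + |s| + |t|) ≤ ‖f i s - f j t‖) →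
      ∀ s t, min (min a b) (min c 1) * (1 + |s| + |t|) ≤ ‖f i s - f j t‖ := by
    intro d hd i j h s t
    refine le_trans ?_ (h s t)
    gcongr
  have swap : ∀ (d : ℝ) (i j : Fin 3), (∀ s t, d * (1 + |s| + |t|) ≤ ‖f i s - f j t‖) →
      ∀ s t, d * (1 + |s| + |t|) ≤ ‖f j s - f i t‖ := by
    intro d i j h s t
    rw [norm_sub_rev]
    refine le_trans (le_of_eq ?_) (h t s)
    ring
  refine ⟨min (min a b) (min c 1), hmin, (min_le_right _ _).trans (min_le_right _ _), ?_⟩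
  have k01 := key a ((min_le_left _ _).trans (min_le_left _ _)) 0 1 h01
  have k02 := key b ((min_le_left _ _).trans (min_le_right _ _)) 0 2 h02
  have k12 := key c ((min_le_right _ _).trans (min_le_left _ _)) 1 2 h12
  intro i j s t hij
  fin_cases i <;> fin_cases j
  · exact absurd rfl hij
  · exact k01 s t
  · exact k02 s t
  · exact swap _ _ _ k01 s t
  · exact absurd rfl hij
  · exact k12 s t
  · exact swap _ _ _ k02 s t
  · exact swap _ _ _ k12 s t
  · exact absurd rfl hij

/-! ### Weights -/

/-- The integrable weight on the line. -/
def wt (s : ℝ) : ℝ := (1 + |s|) ^ (-(5 / 4) : ℝ)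

/-- The integrable radial weight on space. -/
def rad (r : ℝ) : ℝ := (r ^ 2)⁻¹ * (1 + r) ^ (-(3 / 2) : ℝ)

lemma wt_pos (s : ℝ) : 0 < wt s := by unfold wt; positivity

lemma rad_nonneg (r : ℝ) (hr : 0 ≤ r) : 0 ≤ rad r := by unfold rad; positivity

lemma wt_inner (s : ℝ) (hs : |s| ≤ 1) : 1 ≤ 4 * wt s := by
  unfold wt
  rw [Real.rpow_neg (by positivity), ← div_eq_mul_inv, one_le_div (by positivity)]
  calc (1 + |s|) ^ (5 / 4 : ℝ) ≤ 2 ^ (5 / 4 : ℝ) := by gcongr; linarith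
    _ ≤ 2 ^ (2 : ℝ) := by gcongr <;> norm_num
    _ = 4 := by norm_num

lemma inv_sq_le (P a s : ℝ) (ha : 0 ≤ a) (h1 : 1 + a ≤ P) (h2 : 1 + |s| ≤ P) :
    (P ^ 2)⁻¹ ≤ (1 + a) ^ (-(3 / 4) : ℝ) * wt s := by
  have hP : 0 < P := by linarith
  unfold wt
  rw [Real.rpow_neg (by positivity), Real.rpow_neg (by positivity), ← mul_inv]
  gcongr
  calc (1 + a) ^ (3 / 4 : ℝ) * (1 + |s|) ^ (5 / 4 : ℝ) ≤ P ^ (3 / 4 : ℝ) * P ^ (5 / 4 : ℝ) := by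
        gcongr
    _ = P ^ 2 := by
        rw [← Real.rpow_add hP, ← Real.rpow_natCast]; norm_num

lemma inv_sq_le' (P s : ℝ) (h2 : 1 + |s| ≤ P) : (P ^ 2)⁻¹ ≤ wt s := by
  have := inv_sq_le P 0 s le_rfl (by linarith [abs_nonneg s]) h2
  simpa using this

/-- The case where `a` is the smallest distance. -/
lemma triple_min (κ a b c r s t : ℝ) (hκ : 0 < κ) (hκ1 : κ ≤ 1) (ha : 0 < a)
    (hab : a ≤ b) (hac : a ≤ c) (h1 : κ * (1 + |r| + |s|) ≤ a + b)
    (h2 : κ * (1 + |r| + |t|) ≤ a + c) (hin : |r| ≤ 1 ∨ |s| ≤ 1 ∨ |t| ≤ 1) :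
    (a ^ 2)⁻¹ * (b ^ 2)⁻¹ * (c ^ 2)⁻¹ ≤ 4 * (4 / κ) ^ 4 * (wt r * wt s * wt t * rad a) := by
  have hr := abs_nonneg r
  have hs := abs_nonneg s
  have ht := abs_nonneg t
  have hκa : κ * a ≤ a := by nlinarith
  set P := 1 + |r| + |s| + a with hP
  set Q := 1 + |r| + |t| + a with hQ
  have hb : κ / 4 * P ≤ b := by
    rw [hP]; nlinarith
  have hc : κ / 4 * Q ≤ c := by
    rw [hQ]; nlinarith
  have hP0 : 0 < P := by positivity
  have hQ0 : 0 < Q := by positivity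
  have hbi : (b ^ 2)⁻¹ ≤ (4 / κ) ^ 2 * (P ^ 2)⁻¹ := by
    calc (b ^ 2)⁻¹ ≤ ((κ / 4 * P) ^ 2)⁻¹ := by gcongr
      _ = _ := by field_simp
  have hci : (c ^ 2)⁻¹ ≤ (4 / κ) ^ 2 * (Q ^ 2)⁻¹ := by
    calc (c ^ 2)⁻¹ ≤ ((κ / 4 * Q) ^ 2)⁻¹ := by gcongr
      _ = _ := by field_simp
  have ew : (1 + a) ^ (-(3 / 4) : ℝ) * (1 + a) ^ (-(3 / 4) : ℝ) = (1 + a) ^ (-(3 / 2) : ℝ) := by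
    rw [← Real.rpow_add (by positivity)]; norm_num
  have hPQ : (P ^ 2)⁻¹ * (Q ^ 2)⁻¹ ≤ 4 * (wt r * wt s * wt t) * (1 + a) ^ (-(3 / 2) : ℝ) := by
    have key : ∀ x y z : ℝ, 1 + |x| ≤ P → 1 + |y| ≤ Q → |z| ≤ 1 →
        (P ^ 2)⁻¹ * (Q ^ 2)⁻¹ ≤ 4 * (wt x * wt y * wt z) * (1 + a) ^ (-(3 / 2) : ℝ) := by
      intro x y z hx hy hz
      have i1 := inv_sq_le P a x ha.le (by linarith) hx
      have i2 := inv_sq_le Q a y ha.le (by linarith) hy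
      have i3 := wt_inner z hz
      have := wt_pos x
      have := wt_pos y
      calc (P ^ 2)⁻¹ * (Q ^ 2)⁻¹
          ≤ ((1 + a) ^ (-(3 / 4) : ℝ) * wt x) * ((1 + a) ^ (-(3 / 4) : ℝ) * wt y) * 1 := by
            rw [mul_one]; gcongr
        _ ≤ ((1 + a) ^ (-(3 / 4) : ℝ) * wt x) * ((1 + a) ^ (-(3 / 4) : ℝ) * wt y) * (4 * wt z) := by
            gcongr
        _ = _ := by rw [← ew]; ring
    rcases hin with h | h | h
    · refine (key s t r (by linarith) (by linarith) h).trans (le_of_eq (by ring))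
    · refine (key r t s (by linarith) (by linarith) h).trans (le_of_eq (by ring))
    · refine (key s r t (by linarith) (by linarith) h).trans (le_of_eq (by ring))
  calc (a ^ 2)⁻¹ * (b ^ 2)⁻¹ * (c ^ 2)⁻¹
      ≤ (a ^ 2)⁻¹ * ((4 / κ) ^ 2 * (P ^ 2)⁻¹) * ((4 / κ) ^ 2 * (Q ^ 2)⁻¹) := by gcongr
    _ = (a ^ 2)⁻¹ * (4 / κ) ^ 4 * ((P ^ 2)⁻¹ * (Q ^ 2)⁻¹) := by ring
    _ ≤ (a ^ 2)⁻¹ * (4 / κ) ^ 4 * (4 * (wt r * wt s * wt t) * (1 + a) ^ (-(3 / 2) : ℝ)) := by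
        gcongr
    _ = _ := by unfold rad; ring

lemma triple_bound (κ a b c r s t : ℝ) (hκ : 0 < κ) (hκ1 : κ ≤ 1) (ha : 0 < a) (hb : 0 < b)
    (hc : 0 < c) (h1 : κ * (1 + |r| + |s|) ≤ a + b) (h2 : κ * (1 + |r| + |t|) ≤ a + c)
    (h3 : κ * (1 + |s| + |t|) ≤ b + c) (hin : |r| ≤ 1 ∨ |s| ≤ 1 ∨ |t| ≤ 1) :
    (a ^ 2)⁻¹ * (b ^ 2)⁻¹ * (c ^ 2)⁻¹ ≤
      4 * (4 / κ) ^ 4 * (wt r * wt s * wt t * (rad a + rad b + rad c)) := by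
  have hra := rad_nonneg a ha.le
  have hrb := rad_nonneg b hb.le
  have hrc := rad_nonneg c hc.le
  have := wt_pos r
  have := wt_pos s
  have := wt_pos t
  by_cases hab : a ≤ b
  · by_cases hac : a ≤ c
    · refine (triple_min κ a b c r s t hκ hκ1 ha hab hac h1 h2 hin).trans ?_
      gcongr
      linarith
    · have := triple_min κ c a b t r s hκ hκ1 hc (by linarith) (by linarith)
        (by linarith) (by linarith) (by tauto)
      calc _ = (c ^ 2)⁻¹ * (a ^ 2)⁻¹ * (b ^ 2)⁻¹ := by ring
        _ ≤ _ := this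
        _ = 4 * (4 / κ) ^ 4 * (wt r * wt s * wt t * rad c) := by ring
        _ ≤ _ := by gcongr; linarith
  · by_cases hbc : b ≤ c
    · have := triple_min κ b a c s r t hκ hκ1 hb (by linarith) (by linarith)
        (by linarith) (by linarith) (by tauto)
      calc _ = (b ^ 2)⁻¹ * (a ^ 2)⁻¹ * (c ^ 2)⁻¹ := by ring
        _ ≤ _ := this
        _ = 4 * (4 / κ) ^ 4 * (wt r * wt s * wt t * rad b) := by ring
        _ ≤ _ := by gcongr; linarith
    · have := triple_min κ c a b t r s hκ hκ1 hc (by linarith) (by linarith)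
        (by linarith) (by linarith) (by tauto)
      calc _ = (c ^ 2)⁻¹ * (a ^ 2)⁻¹ * (b ^ 2)⁻¹ := by ring
        _ ≤ _ := this
        _ = 4 * (4 / κ) ^ 4 * (wt r * wt s * wt t * rad c) := by ring
        _ ≤ _ := by gcongr; linarith

/-! ### Integrability of the weights -/

lemma wt_integrable : Integrable wt := by
  have := integrable_one_add_norm (E := ℝ) (μ := volume) (r := 5 / 4) (by simp; norm_num)
  exact this

lemma rad_integrable : Integrable (fun x : E3 => rad ‖x‖) := by
  rw [integrable_fun_norm_addHaar]
  have h : Integrable (fun y : ℝ => (1 + ‖y‖) ^ (-(3 / 2) : ℝ)) :=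
    integrable_one_add_norm (E := ℝ) (μ := volume) (r := 3 / 2) (by simp; norm_num)
  refine (h.integrableOn (s := Ioi 0)).congr_fun ?_ measurableSet_Ioi
  intro y hy
  have hy : 0 < y := hy
  have hd : Module.finrank ℝ E3 - 1 = 2 := by simp
  simp only [hd, smul_eq_mul, rad, Real.norm_eq_abs, abs_of_pos hy]
  field_simp

lemma wt4_integrable : Integrable (fun x : E4 => wt (x 0) * wt (x 1) * wt (x 2) * wt (x 3)) := by
  have h : Integrable (fun x : Fin 4 → ℝ => ∏ i, wt (x i)) :=
    Integrable.fintype_prod (f := fun _ => wt) (fun _ => wt_integrable)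
  have := (PiLp.volume_preserving_ofLp (Fin 4)).integrable_comp_of_integrable h
  refine this.congr (ae_of_all _ fun x => ?_)
  simp [Fin.prod_univ_four]

lemma split6 : MeasurePreserving (fun x : E6 => ((![x 0, x 1, x 2] : Fin 3 → ℝ), ptY x))
    volume ((volume : Measure (Fin 3 → ℝ)).prod (volume : Measure E3)) := by
  have h1 := PiLp.volume_preserving_ofLp (Fin 6)
  have h2 := volume_measurePreserving_piCongrLeft (fun _ : Fin 3 ⊕ Fin 3 => ℝ)
    (finSumFinEquiv (m := 3) (n := 3)).symm
  have h3 := volume_measurePreserving_sumPiEquivProdPi (fun _ : Fin 3 ⊕ Fin 3 => ℝ)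
  have h4 := (MeasurePreserving.id (volume : Measure (Fin 3 → ℝ))).prod
    (PiLp.volume_preserving_toLp (Fin 3))
  have h5 := h4.comp (h3.comp (h2.comp h1))
  suffices e : (fun x : E6 => ((![x 0, x 1, x 2] : Fin 3 → ℝ), ptY x)) =
      Prod.map id (WithLp.toLp 2) ∘ (MeasurableEquiv.sumPiEquivProdPi fun _ : Fin 3 ⊕ Fin 3 => ℝ) ∘
        (MeasurableEquiv.piCongrLeft (fun _ : Fin 3 ⊕ Fin 3 => ℝ)
          (finSumFinEquiv (m := 3) (n := 3)).symm) ∘ WithLp.ofLp by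
    rw [e]
    exact h5
  funext x
  refine Prod.ext ?_ ?_
  · funext i
    fin_cases i <;> rfl
  · ext i
    fin_cases i <;> rfl

lemma wt6_integrable (c : ℝ → E3) (hc : Continuous c) (i : Fin 3) :
    Integrable (fun x : E6 => wt (x 0) * wt (x 1) * wt (x 2) *
      rad ‖ptY x - c ((![x 0, x 1, x 2] : Fin 3 → ℝ) i)‖) := by
  have h : Integrable (fun x : Fin 3 → ℝ => ∏ i, wt (x i)) :=
    Integrable.fintype_prod (f := fun _ => wt) (fun _ => wt_integrable)
  have h2 := h.mul_prod rad_integrable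
  have h3 : MeasurePreserving (fun p : (Fin 3 → ℝ) × E3 => (id p.1, p.2 - c (p.1 i)))
      ((volume : Measure (Fin 3 → ℝ)).prod (volume : Measure E3))
      ((volume : Measure (Fin 3 → ℝ)).prod (volume : Measure E3)) := by
    refine (MeasurePreserving.id (volume : Measure (Fin 3 → ℝ))).skew_product
      (g := fun y z => z - c (y i)) ?_ (ae_of_all _ fun y => ?_)
    · apply Continuous.measurable
      unfold Function.uncurry
      fun_prop
    · exact (measurePreserving_sub_right volume (c (y i))).map_eq
  have h4 := (h3.comp split6).integrable_comp_of_integrable h2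
  refine h4.congr (ae_of_all _ fun x => ?_)
  simp [Fin.prod_univ_three]

/-! ### The alternating sum vanishes in the presence of a common kernel vector -/

/-- The multilinear map underlying a triple wedge product. -/
def triMul {M : Type*} [AddCommGroup M] [Module ℝ M] (A B C : M →ₗ[ℝ] M →ₗ[ℝ] ℝ) :
    MultilinearMap ℝ (fun _ : Fin 6 => M) ℝ where
  toFun u := A (u 0) (u 1) * B (u 2) (u 3) * C (u 4) (u 5)
  map_update_add' := by
    intro inst u i x y
    obtain rfl : inst = instDecidableEqFin 6 := Subsingleton.elim _ _
    fin_cases i <;> simp [Fin.ext_iff] <;> ring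
  map_update_smul' := by
    intro inst u i c x
    obtain rfl : inst = instDecidableEqFin 6 := Subsingleton.elim _ _
    fin_cases i <;> simp [Fin.ext_iff] <;> ring

lemma tri_sum_zero {M : Type*} [AddCommGroup M] [Module ℝ M] (A B C : M →ₗ[ℝ] M →ₗ[ℝ] ℝ)
    (u : Fin 6 → M) (hu : ¬ LinearIndependent ℝ u) :
    ∑ σ : Equiv.Perm (Fin 6), ((Equiv.Perm.sign σ : ℤ) : ℝ) * A (u (σ 0)) (u (σ 1)) *
      B (u (σ 2)) (u (σ 3)) * C (u (σ 4)) (u (σ 5)) = 0 := by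
  have h := AlternatingMap.map_linearDependent (MultilinearMap.alternatization (triMul A B C)) u hu
  rw [MultilinearMap.alternatization_apply] at h
  rw [← h]
  refine Finset.sum_congr rfl fun σ _ => ?_
  rw [Units.smul_def, zsmul_eq_mul]
  simp only [MultilinearMap.domDomCongr_apply, triMul, MultilinearMap.coe_mk]
  ring

/-- `det3 p` as a bilinear map. -/
def detB (c : ℝ) (p : E3) : E3 →ₗ[ℝ] E3 →ₗ[ℝ] ℝ :=
  LinearMap.mk₂ ℝ (fun v w => c * det3 p v w)
    (by intros; simp [det3]; ring) (by intros; simp [det3]; ring)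
    (by intros; simp [det3]; ring) (by intros; simp [det3]; ring)

lemma wedge222_zero (g : E3 → ℝ) (h k l : E6 → E3) (x : E6) (hx : x ≠ 0)
    (hh : fderiv ℝ h x x = 0) (hk : fderiv ℝ k x x = 0) (hl : fderiv ℝ l x x = 0) :
    wedge222 g h k l x = 0 := by
  set L : E6 →L[ℝ] E3 × E3 × E3 :=
    (fderiv ℝ h x).prod ((fderiv ℝ k x).prod (fderiv ℝ l x)) with hL
  have hLx : L x = 0 := by simp [hL, hh, hk, hl]
  set u : Fin 6 → E3 × E3 × E3 := fun i => L (EuclideanSpace.single i 1) with hu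
  have hdep : ¬ LinearIndependent ℝ u := by
    intro hli
    apply hx
    rw [Fintype.linearIndependent_iff] at hli
    have hsum : ∑ i, x i • u i = 0 := by
      rw [← hLx]
      have hxs : x = ∑ i, x i • (EuclideanSpace.single i 1 : E6) := by
        ext j
        simp [Finset.sum_apply, Pi.single_apply]
      conv_rhs => rw [hxs]
      simp [hu]
    ext i
    simpa using hli _ hsum i
  have key := tri_sum_zero
    ((detB (g (h x)) (h x)).compl₁₂ (LinearMap.fst ℝ E3 (E3 × E3)) (LinearMap.fst ℝ E3 (E3 × E3)))
    ((detB (g (k x)) (k x)).compl₁₂ ((LinearMap.fst ℝ E3 E3).comp (LinearMap.snd ℝ E3 (E3 × E3)))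
      ((LinearMap.fst ℝ E3 E3).comp (LinearMap.snd ℝ E3 (E3 × E3))))
    ((detB (g (l x)) (l x)).compl₁₂ ((LinearMap.snd ℝ E3 E3).comp (LinearMap.snd ℝ E3 (E3 × E3)))
      ((LinearMap.snd ℝ E3 E3).comp (LinearMap.snd ℝ E3 (E3 × E3)))) u hdep
  unfold wedge222
  rw [mul_eq_zero]
  right
  exact key

lemma unit_kernel (v : E6 → E3) (v' : E6 →L[ℝ] E3) (x : E6) (hv : HasFDerivAt v v' x)
    (hx : v x ≠ 0) (h : v' x = v x) : fderiv ℝ (fun y => unitv (v y)) x x = 0 := by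
  obtain ⟨U, hU, -, hU0, -⟩ := unitv_hasFDerivAt (v x) hx
  have hc : HasFDerivAt (fun y => unitv (v y)) (U.comp v') x := hU.comp x hv
  rw [hc.fderiv, ContinuousLinearMap.comp_apply, h, hU0]

/-! ### Measurability -/

lemma unitv_measurable : Measurable unitv := by
  unfold unitv
  fun_prop

lemma det3_measurable {α : Type*} [MeasurableSpace α] {p v w : α → E3} (hp : Measurable p)
    (hv : Measurable v) (hw : Measurable w) : Measurable (fun x => det3 (p x) (v x) (w x)) := by
  have hc : ∀ i : Fin 3, Measurable (fun v : E3 => v i) := fun i => by fun_prop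
  have a := fun i => (hc i).comp hp
  have b := fun i => (hc i).comp hv
  have c := fun i => (hc i).comp hw
  exact (((a 0).mul (((b 1).mul (c 2)).sub ((b 2).mul (c 1)))).sub
    ((a 1).mul (((b 0).mul (c 2)).sub ((b 2).mul (c 0))))).add
    ((a 2).mul (((b 0).mul (c 1)).sub ((b 1).mul (c 0))))

lemma form2_measurable {n : ℕ} {g : E3 → ℝ} (hg : Continuous g)
    {h : EuclideanSpace ℝ (Fin n) → E3} (hh : Measurable h) (i j : Fin n) :
    Measurable (fun x => form2 g h x i j) := by
  unfold form2
  exact (hg.measurable.comp hh).mul (det3_measurable hh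
    (measurable_fderiv_apply_const ℝ h _) (measurable_fderiv_apply_const ℝ h _))

lemma wedge22_measurable {g : E3 → ℝ} (hg : Continuous g) {h k : E4 → E3} (hh : Measurable h)
    (hk : Measurable k) : Measurable (wedge22 g h k) := by
  unfold wedge22
  refine Measurable.const_mul ?_ _
  refine Finset.measurable_sum _ fun σ _ => ?_
  exact ((form2_measurable hg hh _ _).const_mul _).mul (form2_measurable hg hk _ _)

lemma wedge222_measurable {g : E3 → ℝ} (hg : Continuous g) {h k l : E6 → E3} (hh : Measurable h)
    (hk : Measurable k) (hl : Measurable l) : Measurable (wedge222 g h k l) := by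
  unfold wedge222
  refine Measurable.const_mul ?_ _
  refine Finset.measurable_sum _ fun σ _ => ?_
  exact (((form2_measurable hg hh _ _).const_mul _).mul (form2_measurable hg hk _ _)).mul
    (form2_measurable hg hl _ _)

lemma abs_sign_cast {n : ℕ} (σ : Equiv.Perm (Fin n)) : |((Equiv.Perm.sign σ : ℤ) : ℝ)| = 1 := by
  rcases Int.units_eq_one_or (Equiv.Perm.sign σ) with h | h <;> simp [h]

lemma wedge22_bound (g : E3 → ℝ) (h k : E4 → E3) (x : E4) (A B : ℝ)
    (hA : ∀ i j, |form2 g h x i j| ≤ A) (hB : ∀ i j, |form2 g k x i j| ≤ B) :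
    |wedge22 g h k x| ≤ 6 * (A * B) := by
  have hA0 : 0 ≤ A := (abs_nonneg _).trans (hA 0 0)
  unfold wedge22
  rw [abs_mul]
  have : |∑ σ : Equiv.Perm (Fin 4), ((Equiv.Perm.sign σ : ℤ) : ℝ) * form2 g h x (σ 0) (σ 1) *
      form2 g k x (σ 2) (σ 3)| ≤ ∑ σ : Equiv.Perm (Fin 4), A * B := by
    refine (Finset.abs_sum_le_sum_abs _ _).trans (Finset.sum_le_sum fun σ _ => ?_)
    rw [abs_mul, abs_mul, abs_sign_cast, one_mul]
    gcongr
    · exact hA _ _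
    · exact hB _ _
  rw [Finset.sum_const, Finset.card_univ, Fintype.card_perm, Fintype.card_fin, nsmul_eq_mul] at this
  norm_num [Nat.factorial] at this ⊢
  linarith

lemma wedge222_bound (g : E3 → ℝ) (h k l : E6 → E3) (x : E6) (A B C : ℝ)
    (hA : ∀ i j, |form2 g h x i j| ≤ A) (hB : ∀ i j, |form2 g k x i j| ≤ B)
    (hC : ∀ i j, |form2 g l x i j| ≤ C) :
    |wedge222 g h k l x| ≤ 90 * (A * B * C) := by
  have hA0 : 0 ≤ A := (abs_nonneg _).trans (hA 0 0)
  have hB0 : 0 ≤ B := (abs_nonneg _).trans (hB 0 0)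
  unfold wedge222
  rw [abs_mul]
  have : |∑ σ : Equiv.Perm (Fin 6), ((Equiv.Perm.sign σ : ℤ) : ℝ) * form2 g h x (σ 0) (σ 1) *
      form2 g k x (σ 2) (σ 3) * form2 g l x (σ 4) (σ 5)| ≤
      ∑ σ : Equiv.Perm (Fin 6), A * B * C := by
    refine (Finset.abs_sum_le_sum_abs _ _).trans (Finset.sum_le_sum fun σ _ => ?_)
    rw [abs_mul, abs_mul, abs_mul, abs_sign_cast, one_mul]
    gcongr
    · exact hA _ _
    · exact hB _ _
    · exact hC _ _
  rw [Finset.sum_const, Finset.card_univ, Fintype.card_perm, Fintype.card_fin, nsmul_eq_mul] at this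
  norm_num [Nat.factorial] at this ⊢
  linarith

/-! ### Estimates for the integrands -/

lemma coord_hasFDerivAt {n : ℕ} (c : ℝ → E3) (hc : Differentiable ℝ c) (q : Fin n)
    (x : EuclideanSpace ℝ (Fin n)) :
    HasFDerivAt (fun y : EuclideanSpace ℝ (Fin n) => c (y q))
      ((EuclideanSpace.proj q : EuclideanSpace ℝ (Fin n) →L[ℝ] ℝ).smulRight (deriv c (x q))) x := by
  have h1 : HasFDerivAt (fun y : EuclideanSpace ℝ (Fin n) => y q)
      (EuclideanSpace.proj q : EuclideanSpace ℝ (Fin n) →L[ℝ] ℝ) x :=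
    (EuclideanSpace.proj q : EuclideanSpace ℝ (Fin n) →L[ℝ] ℝ).hasFDerivAt
  refine HasFDerivAt.congr_fderiv ((hc (x q)).hasDerivAt.hasFDerivAt.comp x h1) ?_
  refine ContinuousLinearMap.ext fun w => ?_
  simp

lemma single_abs_le {n : ℕ} (i q : Fin n) :
    |(EuclideanSpace.single i 1 : EuclideanSpace ℝ (Fin n)) q| ≤ 1 := by
  by_cases h : q = i <;> simp [h]

lemma link_differentiable (f : Fin 3 → ℝ → E3) (hf : IsLongLink3 f) (i : Fin 3) :
    Differentiable ℝ (f i) := (hf.1 i).differentiable (by simp)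

lemma g_bound (g : E3 → ℝ) (hg : Continuous g) : ∃ G : ℝ, ∀ v : E3, ‖v‖ = 1 → |g v| ≤ G := by
  obtain ⟨G, hG⟩ := (isCompact_sphere (0 : E3) 1).exists_bound_of_continuousOn hg.continuousOn
  exact ⟨G, fun v hv => hG v (by simpa using hv)⟩

lemma pair_bound (f : Fin 3 → ℝ → E3) (hf : IsLongLink3 f) (g : E3 → ℝ) (hg : Continuous g)
    (a b : Fin 3) (hab : b ≠ a) (p q : Fin 4) :
    ∃ C : ℝ, ∀ (x : E4) (i j : Fin 4),
      |form2 g (fun y : E4 => unitv (f b (y q) - f a (y p))) x i j| ≤ C * (wt (x p) * wt (x q)) := by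
  obtain ⟨G, hG⟩ := g_bound g hg
  obtain ⟨M, hM0, hM⟩ := link_deriv_bound f hf
  obtain ⟨κ, hκ, -, hsep⟩ := link_sep f hf
  have hG0 : 0 ≤ G := (abs_nonneg _).trans (hG _ (norm_unitv NP (by
    intro h
    have : NP 2 = 0 := by rw [h]; rfl
    exact one_ne_zero this)))
  refine ⟨24 * G * (2 * M) ^ 2 * (κ ^ 2)⁻¹ * 4, fun x i j => ?_⟩
  have hd := (coord_hasFDerivAt (f b) (link_differentiable f hf b) q x).sub
    (coord_hasFDerivAt (f a) (link_differentiable f hf a) p x)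
  have hd : HasFDerivAt (fun y : E4 => f b (y q) - f a (y p)) _ x := hd
  have hsx := hsep b a (x q) (x p) hab
  have hp0 := abs_nonneg (x p)
  have hq0 := abs_nonneg (x q)
  have hpos : 0 < ‖f b (x q) - f a (x p)‖ := lt_of_lt_of_le (by positivity) hsx
  have hne : f b (x q) - f a (x p) ≠ 0 := norm_pos_iff.mp hpos
  have hw1 := wt_pos (x p)
  have hw2 := wt_pos (x q)
  by_cases hout : 1 < |x q| ∧ 1 < |x p|
  · obtain ⟨c, hc, -, hcd, hce⟩ := link_outer f hf b (x q) hout.1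
    obtain ⟨d, hd', -, hdd, hde⟩ := link_outer f hf a (x p) hout.2
    rw [form2_planar g _ _ x hd hne, abs_zero]
    · positivity
    · simp [hce, hde, hc, hd']
    · intro k
      simp only [hcd.deriv, hdd.deriv]
      by_cases h1 : q = k <;> by_cases h2 : p = k <;> simp [h1, h2, hc, hd']
  · refine (form2_bound g G (2 * M) hG _ _ x hd hne ?_ i j).trans ?_
    · intro k
      have e : ∀ (r : Fin 4) (u : E3), ((EuclideanSpace.proj r : E4 →L[ℝ] ℝ).smulRight u)
          (EuclideanSpace.single k 1) = ((EuclideanSpace.single k 1 : E4) r) • u := fun _ _ => rfl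
      have e2 : ∀ (r : Fin 4) (u : E3), ‖u‖ ≤ M →
          ‖((EuclideanSpace.single k 1 : E4) r) • u‖ ≤ M := by
        intro r u hu
        rw [norm_smul, Real.norm_eq_abs]
        have := single_abs_le k r
        nlinarith [norm_nonneg u]
      rw [sub_apply, e, e]
      refine (norm_sub_le _ _).trans ?_
      have := e2 q _ (hM b (x q))
      have := e2 p _ (hM a (x p))
      linarith
    · have h1 : (‖f b (x q) - f a (x p)‖ ^ 2)⁻¹ ≤ (κ ^ 2)⁻¹ * ((1 + |x q| + |x p|) ^ 2)⁻¹ := by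
        rw [← mul_inv, ← mul_pow]
        gcongr
      have h2 : ((1 + |x q| + |x p|) ^ 2)⁻¹ ≤ 4 * (wt (x p) * wt (x q)) := by
        rw [not_and_or, not_lt, not_lt] at hout
        rcases hout with h | h
        · have := inv_sq_le' (1 + |x q| + |x p|) (x p) (by linarith)
          have := wt_inner _ h
          nlinarith
        · have := inv_sq_le' (1 + |x q| + |x p|) (x q) (by linarith)
          have := wt_inner _ h
          nlinarith
      rw [div_eq_mul_inv]
      calc _ ≤ 24 * G * (2 * M) ^ 2 * ((κ ^ 2)⁻¹ * (4 * (wt (x p) * wt (x q)))) := by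
            gcongr
            exact h1.trans (by gcongr)
        _ = _ := by ring

lemma pair_measurable (f : Fin 3 → ℝ → E3) (hf : IsLongLink3 f) (a b : Fin 3) (p q : Fin 4) :
    Measurable (fun y : E4 => unitv (f b (y q) - f a (y p))) := by
  have ha := (hf.1 a).continuous
  have hb := (hf.1 b).continuous
  refine unitv_measurable.comp (Continuous.measurable ?_)
  fun_prop

lemma pair_integrable (f : Fin 3 → ℝ → E3) (hf : IsLongLink3 f) (g : E3 → ℝ) (hg : Continuous g)
    (a b a' b' : Fin 3) (hab : b ≠ a) (hab' : b' ≠ a') (p q p' q' : Fin 4)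
    (hperm : ∀ x : E4, wt (x p) * wt (x q) * (wt (x p') * wt (x q')) =
      wt (x 0) * wt (x 1) * wt (x 2) * wt (x 3)) :
    Integrable (wedge22 g (fun y : E4 => unitv (f b (y q) - f a (y p)))
      (fun y : E4 => unitv (f b' (y q') - f a' (y p')))) := by
  obtain ⟨A, hA⟩ := pair_bound f hf g hg a b hab p q
  obtain ⟨B, hB⟩ := pair_bound f hf g hg a' b' hab' p' q'
  refine (wt4_integrable.const_mul (6 * (A * B))).mono'
    (wedge22_measurable hg (pair_measurable f hf a b p q)
      (pair_measurable f hf a' b' p' q')).aestronglyMeasurable (ae_of_all _ fun x => ?_)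
  rw [Real.norm_eq_abs]
  refine (wedge22_bound g _ _ x _ _ (hA x) (hB x)).trans (le_of_eq ?_)
  rw [← hperm]
  ring

/-! ### The tripod integral -/

/-- `ptY` as a continuous linear map. -/
def ptYL : E6 →L[ℝ] E3 := LinearMap.toContinuousLinearMap
  { toFun := ptY
    map_add' := by
      intro x y
      ext k
      fin_cases k <;> simp [ptY, mk3]
    map_smul' := by
      intro c x
      ext k
      fin_cases k <;> simp [ptY, mk3] }

lemma ptYL_apply (x : E6) : ptYL x = ptY x := rfl

lemma leg_data (f : Fin 3 → ℝ → E3) (hf : IsLongLink3 f) (g : E3 → ℝ) (hg : Continuous g)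
    (a : Fin 3) (q : Fin 6) (σ : ℝ) (hσ : |σ| = 1) :
    ∃ C : ℝ, 0 ≤ C ∧ ∀ x : E6, ptY x ≠ f a (x q) →
      (∀ i j, |form2 g (fun y : E6 => unitv (σ • (ptY y - f a (y q)))) x i j| ≤
        C * (‖ptY x - f a (x q)‖ ^ 2)⁻¹) ∧
      (1 < |x q| → fderiv ℝ (fun y : E6 => unitv (σ • (ptY y - f a (y q)))) x x = 0) := by
  obtain ⟨G, hG⟩ := g_bound g hg
  obtain ⟨M, hM0, hM⟩ := link_deriv_bound f hf
  have hG0 : 0 ≤ G := (abs_nonneg _).trans (hG _ (norm_unitv NP (by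
    intro h
    have : NP 2 = 0 := by rw [h]; rfl
    exact one_ne_zero this)))
  have hK0 := norm_nonneg ptYL
  refine ⟨24 * G * (‖ptYL‖ + M) ^ 2, by positivity, fun x hx => ?_⟩
  have hσ0 : σ ≠ 0 := by
    rintro rfl
    simp at hσ
  have hd := ((ptYL.hasFDerivAt (x := x)).sub
    (coord_hasFDerivAt (f a) (link_differentiable f hf a) q x)).const_smul σ
  have hd : HasFDerivAt (fun y : E6 => σ • (ptY y - f a (y q))) _ x := hd
  have hne : σ • (ptY x - f a (x q)) ≠ 0 := smul_ne_zero hσ0 (sub_ne_zero.mpr hx)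
  refine ⟨fun i j => ?_, fun hout => ?_⟩
  · refine (form2_bound g G (‖ptYL‖ + M) hG _ _ x hd hne ?_ i j).trans (le_of_eq ?_)
    · intro k
      have e : (σ • (ptYL - (EuclideanSpace.proj q : E6 →L[ℝ] ℝ).smulRight (deriv (f a) (x q))))
          (EuclideanSpace.single k 1) = σ • (ptYL (EuclideanSpace.single k 1) -
            ((EuclideanSpace.single k 1 : E6) q) • deriv (f a) (x q)) := rfl
      rw [e, norm_smul, Real.norm_eq_abs, hσ, one_mul]
      refine (norm_sub_le _ _).trans ?_
      gcongr
      · refine (ptYL.le_opNorm _).trans ?_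
        simp
      · rw [norm_smul, Real.norm_eq_abs]
        have := single_abs_le k q
        nlinarith [norm_nonneg (deriv (f a) (x q)), hM a (x q)]
    · rw [norm_smul, Real.norm_eq_abs, hσ, one_mul, div_eq_mul_inv]
  · refine unit_kernel _ _ x hd hne ?_
    obtain ⟨c, -, -, hcd, hce⟩ := link_outer f hf a (x q) hout
    have e : (σ • (ptYL - (EuclideanSpace.proj q : E6 →L[ℝ] ℝ).smulRight (deriv (f a) (x q)))) x
        = σ • (ptY x - x q • deriv (f a) (x q)) := rfl
    rw [e, hcd.deriv, hce]

lemma leg_measurable (f : Fin 3 → ℝ → E3) (hf : IsLongLink3 f) (a : Fin 3) (q : Fin 6) (σ : ℝ) :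
    Measurable (fun y : E6 => unitv (σ • (ptY y - f a (y q)))) := by
  have ha := (hf.1 a).continuous
  have hp : Continuous ptY := ptYL.continuous
  refine unitv_measurable.comp (Continuous.measurable ?_)
  fun_prop

lemma CYL_measurable (f : Fin 3 → ℝ → E3) (hf : IsLongLink3 f) : MeasurableSet (CYL f) := by
  have hp : Continuous ptY := ptYL.continuous
  have h : ∀ (a : Fin 3) (q : Fin 6), IsOpen {x : E6 | ptY x ≠ f a (x q)} := by
    intro a q
    have ha := (hf.1 a).continuous
    exact isOpen_ne_fun hp (by fun_prop)
  exact ((h 0 0).inter ((h 1 1).inter (h 2 2))).measurableSet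

lemma tripod_integrable (f : Fin 3 → ℝ → E3) (hf : IsLongLink3 f) (g : E3 → ℝ)
    (hg : Continuous g) : IntegrableOn (omegaYL f g) (CYL f) volume := by
  obtain ⟨A, hA0, hA⟩ := leg_data f hf g hg 0 0 1 (by simp)
  obtain ⟨B, hB0, hB⟩ := leg_data f hf g hg 1 1 (-1) (by simp)
  obtain ⟨C, hC0, hC⟩ := leg_data f hf g hg 2 2 1 (by simp)
  obtain ⟨κ, hκ, hκ1, hsep⟩ := link_sep f hf
  have eω : omegaYL f g = wedge222 g (fun y : E6 => unitv ((1 : ℝ) • (ptY y - f 0 (y 0))))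
      (fun y : E6 => unitv ((-1 : ℝ) • (ptY y - f 1 (y 1))))
      (fun y : E6 => unitv ((1 : ℝ) • (ptY y - f 2 (y 2)))) := by
    unfold omegaYL
    simp only [one_smul, neg_smul, neg_sub]
  rw [eω]
  have hdom := (((wt6_integrable (f 0) (hf.1 0).continuous 0).add
    (wt6_integrable (f 1) (hf.1 1).continuous 1)).add
    (wt6_integrable (f 2) (hf.1 2).continuous 2)).const_mul (90 * (A * B * C) * (4 * (4 / κ) ^ 4))
  refine hdom.integrableOn.mono' (wedge222_measurable hg (leg_measurable f hf 0 0 1)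
      (leg_measurable f hf 1 1 (-1)) (leg_measurable f hf 2 2 1)).aestronglyMeasurable ?_
  refine ae_restrict_of_forall_mem (CYL_measurable f hf) fun x hx => ?_
  obtain ⟨h0, h1, h2⟩ := hx
  have hA := hA x h0
  have hB := hB x h1
  have hC := hC x h2
  have ea : 0 < ‖ptY x - f 0 (x 0)‖ := norm_pos_iff.mpr (sub_ne_zero.mpr h0)
  have eb : 0 < ‖ptY x - f 1 (x 1)‖ := norm_pos_iff.mpr (sub_ne_zero.mpr h1)
  have ec : 0 < ‖ptY x - f 2 (x 2)‖ := norm_pos_iff.mpr (sub_ne_zero.mpr h2)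
  have w0 := wt_pos (x 0)
  have w1 := wt_pos (x 1)
  have w2 := wt_pos (x 2)
  have tri : ∀ (i j : Fin 3) (s t : ℝ), i ≠ j →
      κ * (1 + |s| + |t|) ≤ ‖ptY x - f i s‖ + ‖ptY x - f j t‖ := by
    intro i j s t hij
    refine (hsep i j s t hij).trans ?_
    have e : f i s - f j t = (ptY x - f j t) - (ptY x - f i s) := by abel
    rw [e, add_comm]
    exact norm_sub_le _ _
  rw [Real.norm_eq_abs]
  have hR : (0 : ℝ) ≤ 90 * (A * B * C) := by positivity
  have goal_eq : (90 * (A * B * C) * (4 * (4 / κ) ^ 4)) *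
      (wt (x 0) * wt (x 1) * wt (x 2) * rad ‖ptY x - f 0 (x 0)‖ +
        wt (x 0) * wt (x 1) * wt (x 2) * rad ‖ptY x - f 1 (x 1)‖ +
        wt (x 0) * wt (x 1) * wt (x 2) * rad ‖ptY x - f 2 (x 2)‖) =
      90 * (A * B * C) * (4 * (4 / κ) ^ 4 * (wt (x 0) * wt (x 1) * wt (x 2) *
        (rad ‖ptY x - f 0 (x 0)‖ + rad ‖ptY x - f 1 (x 1)‖ + rad ‖ptY x - f 2 (x 2)‖))) := by
    ring
  refine le_trans ?_ (le_of_eq goal_eq.symm)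
  by_cases hin : |x 0| ≤ 1 ∨ |x 1| ≤ 1 ∨ |x 2| ≤ 1
  · refine (wedge222_bound g _ _ _ x _ _ _ hA.1 hB.1 hC.1).trans ?_
    have := triple_bound κ _ _ _ (x 0) (x 1) (x 2) hκ hκ1 ea eb ec
      (tri 0 1 (x 0) (x 1) (by decide)) (tri 0 2 (x 0) (x 2) (by decide))
      (tri 1 2 (x 1) (x 2) (by decide)) hin
    refine le_trans (le_of_eq ?_) (mul_le_mul_of_nonneg_left this hR)
    ring
  · push Not at hin
    rw [wedge222_zero g _ _ _ x ?_ (hA.2 hin.1) (hB.2 hin.2.1) (hC.2 hin.2.2), abs_zero]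
    · have := rad_nonneg _ ea.le
      have := rad_nonneg _ eb.le
      have := rad_nonneg _ ec.le
      positivity
    · rintro rfl
      have := hin.1
      simp at this
      linarith

/-- convergence of the configuration space integrals for 3-component
long links. For every 3-component long link `f`, every `ε > 0` and every 2-form `η` as
specified, the configuration space integrals `I_{𝒳₁}(f)`, `I_{𝒳₂}(f)`, `I_{𝒳₃}(f)` and
`I_𝒴(f)` converge absolutely. -/
theorem statement6 (f : Fin 3 → ℝ → E3) (hf : IsLongLink3 f) (ε : ℝ) (hε : 0 < ε)
    (g : E3 → ℝ) (hg : IsEtaForm ε g) :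
    IntegrableOn (omegaL1 f g) CL1 volume ∧ IntegrableOn (omegaL2 f g) CL2 volume ∧
      IntegrableOn (omegaL3 f g) CL3 volume ∧
      IntegrableOn (omegaYL f g) (CYL f) volume := by
  have hgc : Continuous g := hg.1.continuous
  refine ⟨?_, ?_, ?_, tripod_integrable f hf g hgc⟩
  · exact (pair_integrable f hf g hgc 0 1 0 2 (by decide) (by decide) 0 2 1 3
      (fun x => by ring)).integrableOn
  · exact (pair_integrable f hf g hgc 0 1 2 1 (by decide) (by decide) 0 1 3 2
      (fun x => by ring)).integrableOn
  · exact (pair_integrable f hf g hgc 0 2 2 1 (by decide) (by decide) 0 2 3 1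
      (fun x => by ring)).integrableOn
end
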